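/- Let r, ξ, α_D, α_I be real numbers with r − ξ > 0, α_D > 0 and α_I > 0, let A₁ be the 3×3 real matrix whose rows are (0, 0, α_I), (0, −α_D, 0), (0, 0, −α_I), and let m : [0, ∞) → ℝ³ be differentiable with m′(s) = A₁·m(s) for all s ≥ 0 and m(0) = (d₀, d₁, i). Then the function s ↦ e^{−(r−ξ)s}·(m₁(s) + m₂(s)) is integrable on [0, ∞) and ∫₀^∞ e^{−(r−ξ)s}(m₁(s) + m₂(s)) ds = (1/(r−ξ))·d₀ + (1/(r−ξ+α_D))·d₁ + (1/(r−ξ) − 1/(r−ξ+α_I))·i. -/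

import Mathlib

open MeasureTheory Matrix

/-!
If `v` is a left eigenvector of `A` with eigenvalue `μ` and `m′ = A m`, then the scalar `v ⬝ᵥ m`
solves `f′ = μ f`, so its discounted integral at rate `ρ > μ` is `(v ⬝ᵥ m 0) / (ρ - μ)`. For the
dividend dynamics the functional `m ↦ m 0 + m 1` is the sum of the left eigenvectors `(1, 0, 1)`,
`(0, 1, 0)` and `(0, 0, -1)`, with eigenvalues `0`, `-αD` and `-αI`: this produces the three
discount rates in the price coefficients.
-/

section ExponentialGrowth

variable {E : Type*} [NormedAddCommGroup E] [NormedSpace ℝ E] {f : ℝ → E} {a ρ : ℝ}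

theorem eq_exp_smul_of_hasDerivWithinAt_smul {s : Set ℝ} (hs : Convex ℝ s)
    (hf : ∀ t ∈ s, HasDerivWithinAt f (a • f t) s t) {t₀ t : ℝ} (ht₀ : t₀ ∈ s) (ht : t ∈ s) :
    f t = Real.exp (a * (t - t₀)) • f t₀ := by
  have hderiv : ∀ u ∈ s, HasDerivWithinAt (fun u ↦ Real.exp (-a * u) • f u) 0 s u := by
    intro u hu
    have hexp : HasDerivWithinAt (fun u ↦ Real.exp (-a * u)) (Real.exp (-a * u) * -a) s u :=
      (hasDerivAt_const_mul (-a)).exp.hasDerivWithinAt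
    exact (hexp.fun_smul (hf u hu)).congr_deriv (by module)
  have hconst : Real.exp (-a * t) • f t = Real.exp (-a * t₀) • f t₀ := by
    have hle := hs.norm_image_sub_le_of_norm_hasDerivWithin_le hderiv
      (fun _ _ ↦ norm_zero.le) ht₀ ht
    rwa [zero_mul, norm_le_zero_iff, sub_eq_zero] at hle
  calc f t = Real.exp (a * t) • Real.exp (-a * t) • f t := by
        rw [smul_smul, ← Real.exp_add, neg_mul, add_neg_cancel, Real.exp_zero, one_smul]
    _ = Real.exp (a * (t - t₀)) • f t₀ := by
        rw [hconst, smul_smul, ← Real.exp_add]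
        ring_nf

theorem exp_neg_smul_eqOn_of_hasDerivWithinAt_smul
    (hf : ∀ t ∈ Set.Ici 0, HasDerivWithinAt f (a • f t) (Set.Ici 0) t) :
    Set.EqOn (fun t ↦ Real.exp (-ρ * t) • f t) (fun t ↦ Real.exp ((a - ρ) * t) • f 0)
      (Set.Ici 0) := by
  intro t ht
  dsimp only
  rw [eq_exp_smul_of_hasDerivWithinAt_smul (convex_Ici 0) hf Set.self_mem_Ici ht, smul_smul,
    ← Real.exp_add]
  ring_nf

theorem integrableOn_exp_neg_smul_of_hasDerivWithinAt_smul (haρ : a < ρ)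
    (hf : ∀ t ∈ Set.Ici 0, HasDerivWithinAt f (a • f t) (Set.Ici 0) t) :
    IntegrableOn (fun t ↦ Real.exp (-ρ * t) • f t) (Set.Ici 0) := by
  rw [integrableOn_congr_fun (exp_neg_smul_eqOn_of_hasDerivWithinAt_smul hf) measurableSet_Ici,
    integrableOn_Ici_iff_integrableOn_Ioi]
  exact (integrableOn_exp_mul_Ioi (sub_neg.2 haρ) 0).smul_const (f 0)

theorem integral_exp_neg_smul_of_hasDerivWithinAt_smul [CompleteSpace E] (haρ : a < ρ)
    (hf : ∀ t ∈ Set.Ici 0, HasDerivWithinAt f (a • f t) (Set.Ici 0) t) :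
    ∫ t in Set.Ici (0 : ℝ), Real.exp (-ρ * t) • f t = (ρ - a)⁻¹ • f 0 := by
  rw [setIntegral_congr_fun measurableSet_Ici (exp_neg_smul_eqOn_of_hasDerivWithinAt_smul hf),
    integral_smul_const, integral_Ici_eq_integral_Ioi,
    integral_exp_mul_Ioi (sub_neg.2 haρ) 0, mul_zero, Real.exp_zero, neg_div, ← div_neg, neg_sub,
    one_div]

end ExponentialGrowth

section LeftEigenvectors

variable {ι n : Type*} [Fintype ι] [Fintype n] {A : Matrix n n ℝ} {m : ℝ → n → ℝ}

theorem hasDerivWithinAt_dotProduct_of_vecMul_eq_smul {v : n → ℝ} {μ : ℝ} {s : Set ℝ} {t : ℝ}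
    (hm : HasDerivWithinAt m (A *ᵥ m t) s t) (hv : v ᵥ* A = μ • v) :
    HasDerivWithinAt (fun u ↦ v ⬝ᵥ m u) (μ • (v ⬝ᵥ m t)) s t := by
  have hdot : HasDerivWithinAt (fun u ↦ v ⬝ᵥ m u) (v ⬝ᵥ A *ᵥ m t) s t :=
    HasDerivWithinAt.fun_sum fun j _ ↦ (hasDerivWithinAt_pi.1 hm j).const_mul (v j)
  rwa [dotProduct_mulVec, hv, smul_dotProduct] at hdot

variable {v : ι → n → ℝ} {μ : ι → ℝ} {ρ : ℝ}

theorem integrableOn_exp_neg_mul_sum_dotProduct (hμ : ∀ k, μ k < ρ)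
    (hv : ∀ k, v k ᵥ* A = μ k • v k)
    (hm : ∀ t ∈ Set.Ici 0, HasDerivWithinAt m (A *ᵥ m t) (Set.Ici 0) t) :
    IntegrableOn (fun t ↦ Real.exp (-ρ * t) * ((∑ k, v k) ⬝ᵥ m t)) (Set.Ici 0) := by
  simp only [sum_dotProduct, Finset.mul_sum]
  exact integrable_finsetSum _ fun k _ ↦
    integrableOn_exp_neg_smul_of_hasDerivWithinAt_smul (hμ k) fun t ht ↦
      hasDerivWithinAt_dotProduct_of_vecMul_eq_smul (hm t ht) (hv k)

theorem integral_exp_neg_mul_sum_dotProduct (hμ : ∀ k, μ k < ρ)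
    (hv : ∀ k, v k ᵥ* A = μ k • v k)
    (hm : ∀ t ∈ Set.Ici 0, HasDerivWithinAt m (A *ᵥ m t) (Set.Ici 0) t) :
    ∫ t in Set.Ici (0 : ℝ), Real.exp (-ρ * t) * ((∑ k, v k) ⬝ᵥ m t)
      = ∑ k, (ρ - μ k)⁻¹ * (v k ⬝ᵥ m 0) := by
  have hderiv (k : ι) (t : ℝ) (ht : t ∈ Set.Ici 0) :
      HasDerivWithinAt (fun u ↦ v k ⬝ᵥ m u) (μ k • (v k ⬝ᵥ m t)) (Set.Ici 0) t :=
    hasDerivWithinAt_dotProduct_of_vecMul_eq_smul (hm t ht) (hv k)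
  have hint (k : ι) :
      IntegrableOn (fun t ↦ Real.exp (-ρ * t) * (v k ⬝ᵥ m t)) (Set.Ici 0) :=
    integrableOn_exp_neg_smul_of_hasDerivWithinAt_smul (hμ k) (hderiv k)
  simp only [sum_dotProduct, Finset.mul_sum]
  rw [integral_finsetSum _ fun k _ ↦ hint k]
  exact Finset.sum_congr rfl fun k _ ↦
    integral_exp_neg_smul_of_hasDerivWithinAt_smul (hμ k) (hderiv k)

end LeftEigenvectors

theorem discounted_dividend_integral_of_ou_mean_general (r ξ αD αI d₀ d₁ i : ℝ)
    (hr : 0 < r - ξ) (hαD : 0 < r - ξ + αD) (hαI : 0 < r - ξ + αI)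
    (m : ℝ → Fin 3 → ℝ)
    (hderiv : ∀ s ∈ Set.Ici 0, HasDerivWithinAt m
      (!![0, 0, αI; 0, -αD, 0; 0, 0, -αI] *ᵥ m s) (Set.Ici 0) s)
    (h0 : m 0 = ![d₀, d₁, i]) :
    IntegrableOn (fun s ↦ Real.exp (-(r - ξ) * s) * (m s 0 + m s 1)) (Set.Ici 0)
    ∧ ∫ s in Set.Ici (0 : ℝ), Real.exp (-(r - ξ) * s) * (m s 0 + m s 1)
      = (1 / (r - ξ)) * d₀ + (1 / (r - ξ + αD)) * d₁
        + (1 / (r - ξ) - 1 / (r - ξ + αI)) * i := by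
  let v : Fin 3 → Fin 3 → ℝ := ![![1, 0, 1], ![0, 1, 0], ![0, 0, -1]]
  let μ : Fin 3 → ℝ := ![0, -αD, -αI]
  have hv (k : Fin 3) : v k ᵥ* !![0, 0, αI; 0, -αD, 0; 0, 0, -αI] = μ k • v k := by
    fin_cases k <;> simp [v, μ]
  have hμ (k : Fin 3) : μ k < r - ξ := by
    fin_cases k <;> simp [μ] <;> linarith
  have hdividend (s : ℝ) : m s 0 + m s 1 = (∑ k, v k) ⬝ᵥ m s := by
    simp [v, Fin.sum_univ_three, dotProduct]
  simp only [hdividend]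
  refine ⟨integrableOn_exp_neg_mul_sum_dotProduct hμ hv hderiv, ?_⟩
  rw [integral_exp_neg_mul_sum_dotProduct hμ hv hderiv, h0]
  simp only [v, μ, Fin.sum_univ_three, cons_val, vec3_dotProduct']
  ring

/-- Deterministic core of Proposition 1: if `m(s)` is the conditional mean of the
Ornstein–Uhlenbeck state vector `(D₀, D₁, I)`, solving `m′ = A₁ m` on `[0, ∞)` with
`m(0) = (d₀, d₁, i)`, then the discounted integral of expected future dividends
`∫₀^∞ e^{−(r−ξ)s}(m₁(s) + m₂(s)) ds` exists and gives the efficient price coefficients. -/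
theorem discounted_dividend_integral_of_ou_mean (r ξ αD αI d₀ d₁ i : ℝ)
    (hr : r - ξ > 0) (hαD : αD > 0) (hαI : αI > 0)
    (m : ℝ → Fin 3 → ℝ)
    (hderiv : ∀ s : ℝ, 0 ≤ s →
      HasDerivAt m
        ((!![0, 0, αI; 0, -αD, 0; 0, 0, -αI] : Matrix (Fin 3) (Fin 3) ℝ).mulVec (m s)) s)
    (h0 : m 0 = ![d₀, d₁, i]) :
    IntegrableOn (fun s => Real.exp (-(r - ξ) * s) * (m s 0 + m s 1)) (Set.Ici 0)
    ∧ ∫ s in Set.Ici (0 : ℝ), Real.exp (-(r - ξ) * s) * (m s 0 + m s 1)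
      = (1 / (r - ξ)) * d₀ + (1 / (r - ξ + αD)) * d₁
        + (1 / (r - ξ) - 1 / (r - ξ + αI)) * i :=
  discounted_dividend_integral_of_ou_mean_general r ξ αD αI d₀ d₁ i hr
    (add_pos hr hαD) (add_pos hr hαI) m (fun s hs ↦ (hderiv s hs).hasDerivWithinAt) h0
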